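/- Let p > 1, N ≥ m, and fix ε > 0. Then the set of pairs (A, y) ∈ ℝ^{m×N} × ℝ^m with ‖y‖₂ > ε for which the unique optimal solution x* of the generalized basis pursuit denoising problem min ‖x‖_p subject to ‖Ax − y‖₂ ≤ ε fails to satisfy |supp(x*)| = N has Lebesgue measure zero; that is, for almost all (A, y) with 0 < ε < ‖y‖₂, every entry of x* is nonzero. -/

import Mathlib

/-! The `p`-norm gradient is `x ↦ p • (g x_j)_j` with `g t = |t|^(p-2) t`, which is continuous and
strictly increasing. Let `x` be a minimizer with residual `r = Ax - y`. The first-order conditions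
give `‖r‖ = ε` and either `Aᵀ r = 0` or `g x_j = -t (Aᵀ r)_j` for some `t ≥ 0`; the multiplier is
nonzero since `x ≠ 0`. Hence if `x_i = 0`, then the `i`-th column `a_i` of `A` is orthogonal to `r`.

So it suffices to bound, for each `i`, the set `badSet` of all `(A, y)` admitting a point `x` and a
multiplier `t` that satisfy these closed conditions together with `x_i = 0` and `⟨a_i, r⟩ = 0`. It
is the projection of a closed set in a Euclidean space, so it is σ-compact and in particular
measurable. Since `x_i = 0`, the conditions with index `j ≠ i` involve only `y` and the other
columns of `A`, and by monotonicity of `g` they determine `r` (`residual_unique`). Therefore, when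
`y` and all columns but `a_i` are fixed, the possible `a_i` lie in the single hyperplane orthogonal
to `r`, where `r ≠ 0` because `‖r‖ = ε > 0`. Fubini's theorem, in the form
`ae_mem_of_ae_add_linearMap_mem`, finishes the proof. -/

open scoped BigOperators
open MeasureTheory

/-- The `p`-norm (quasi-norm for `0 < p < 1`) on `ℝ^N`. -/
noncomputable def pnorm {N : ℕ} (p : ℝ) (x : Fin N → ℝ) : ℝ :=
  (∑ i, |x i| ^ p) ^ (1 / p)

/-- The Euclidean norm on `ℝ^m`. -/
noncomputable def norm2 {m : ℕ} (v : Fin m → ℝ) : ℝ :=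
  Real.sqrt (∑ i, v i ^ 2)

/-- Matrix-vector multiplication `A x` for `A ∈ ℝ^{m×N}`, `x ∈ ℝ^N`. -/
def mulVec' {m N : ℕ} (A : Fin m → Fin N → ℝ) (x : Fin N → ℝ) : Fin m → ℝ :=
  fun i => ∑ j, A i j * x j

/-- The number of nonzero entries of `x ∈ ℝ^N`, i.e. `|supp(x)|`. -/
noncomputable def suppCard {N : ℕ} (x : Fin N → ℝ) : ℕ :=
  (Finset.univ.filter fun i => x i ≠ 0).card

open scoped Matrix Topology

/-! ### The gradient of the `p`-norm -/

/-- Up to the factor `p`, the derivative of `t ↦ |t| ^ p`. -/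
noncomputable def gradP (p t : ℝ) : ℝ := |t| ^ (p - 2) * t

/-- The vector `Aᵀ r`. -/
def colProd {m N : ℕ} (A : Fin m → Fin N → ℝ) (r : Fin m → ℝ) : Fin N → ℝ :=
  fun j => ∑ k, A k j * r k

lemma gradP_of_nonneg {p t : ℝ} (hp : 1 < p) (ht : 0 ≤ t) : gradP p t = t ^ (p - 1) := by
  unfold gradP
  rcases ht.eq_or_lt with rfl | h
  · rw [Real.zero_rpow (by linarith), mul_zero]
  · rw [abs_of_pos h, show p - 1 = (p - 2) + 1 by ring, Real.rpow_add_one h.ne']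

lemma gradP_neg (p t : ℝ) : gradP p (-t) = -gradP p t := by
  simp [gradP]

lemma gradP_zero (p : ℝ) : gradP p 0 = 0 := by
  simp [gradP]

lemma gradP_strictMono {p : ℝ} (hp : 1 < p) : StrictMono (gradP p) := by
  refine strictMono_of_odd_strictMonoOn_nonneg (gradP_neg p) fun a ha b hb hab => ?_
  rw [gradP_of_nonneg hp ha, gradP_of_nonneg hp hb]
  exact Real.rpow_lt_rpow ha hab (by linarith)

lemma gradP_continuous {p : ℝ} (hp : 1 < p) : Continuous (gradP p) := by
  have h : gradP p = fun t => (max t 0) ^ (p - 1) - (max (-t) 0) ^ (p - 1) := by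
    funext t
    rcases le_total 0 t with ht | ht
    · rw [gradP_of_nonneg hp ht, max_eq_left ht, max_eq_right (by linarith),
        Real.zero_rpow (by linarith), sub_zero]
    · rw [← neg_neg t, gradP_neg, gradP_of_nonneg hp (by linarith), neg_neg, max_eq_right ht,
        max_eq_left (by linarith), Real.zero_rpow (by linarith), zero_sub]
  rw [h]
  have h0 : 0 ≤ p - 1 := by linarith
  exact ((continuous_id.max continuous_const).rpow_const fun _ => Or.inr h0).sub
    ((continuous_neg.max continuous_const).rpow_const fun _ => Or.inr h0)

/-! ### First-order necessary conditions -/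

lemma colProd_dot {m N : ℕ} (A : Fin m → Fin N → ℝ) (r : Fin m → ℝ) (d : Fin N → ℝ) :
    colProd A r ⬝ᵥ d = r ⬝ᵥ mulVec' A d := by
  simp only [colProd, mulVec', dotProduct, Finset.sum_mul, Finset.mul_sum]
  rw [Finset.sum_comm]
  refine Finset.sum_congr rfl fun k _ => Finset.sum_congr rfl fun j _ => by ring

lemma mulVec'_add_smul {m N : ℕ} (A : Fin m → Fin N → ℝ) (x d : Fin N → ℝ) (t : ℝ) :
    mulVec' A (x + t • d) = mulVec' A x + t • mulVec' A d := by
  funext k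
  simp only [mulVec', Pi.add_apply, Pi.smul_apply, smul_eq_mul, Finset.mul_sum,
    ← Finset.sum_add_distrib]
  exact Finset.sum_congr rfl fun j _ => by ring

lemma norm2_le_iff {m : ℕ} {ε : ℝ} (hε : 0 < ε) (v : Fin m → ℝ) :
    norm2 v ≤ ε ↔ v ⬝ᵥ v ≤ ε ^ 2 := by
  have : ∑ i, v i ^ 2 = v ⬝ᵥ v := Finset.sum_congr rfl fun i _ => by ring
  rw [norm2, this, Real.sqrt_le_iff]
  exact and_iff_right hε.le

lemma pnorm_le_iff {N : ℕ} {p : ℝ} (hp : 1 < p) (x z : Fin N → ℝ) :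
    pnorm p x ≤ pnorm p z ↔ ∑ i, |x i| ^ p ≤ ∑ i, |z i| ^ p := by
  have h (w : Fin N → ℝ) : 0 ≤ ∑ i, |w i| ^ p :=
    Finset.sum_nonneg fun i _ => Real.rpow_nonneg (abs_nonneg _) _
  exact Real.rpow_le_rpow_iff (h x) (h z) (by positivity)

lemma residual_sq_expand {m N : ℕ} (A : Fin m → Fin N → ℝ) (y : Fin m → ℝ) (x d : Fin N → ℝ)
    (t : ℝ) :
    (mulVec' A (x + t • d) - y) ⬝ᵥ (mulVec' A (x + t • d) - y) =
      (mulVec' A x - y) ⬝ᵥ (mulVec' A x - y) +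
        t * (2 * (colProd A (mulVec' A x - y) ⬝ᵥ d) + t * (mulVec' A d ⬝ᵥ mulVec' A d)) := by
  rw [mulVec'_add_smul, colProd_dot]
  simp only [dotProduct, Finset.mul_sum, ← Finset.sum_add_distrib]
  exact Finset.sum_congr rfl fun j _ => by
    simp only [Pi.add_apply, Pi.sub_apply, Pi.smul_apply, smul_eq_mul]; ring

/-- The `p`-norm cannot decrease to first order along a direction that stays feasible. -/
lemma dir_nonneg {m N : ℕ} {p ε : ℝ} (hp : 1 < p) (A : Fin m → Fin N → ℝ)
    (y : Fin m → ℝ) (x d : Fin N → ℝ)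
    (hmin : ∀ z, norm2 (mulVec' A z - y) ≤ ε → pnorm p x ≤ pnorm p z)
    (hd : ∀ᶠ t : ℝ in 𝓝[>] 0, norm2 (mulVec' A (x + t • d) - y) ≤ ε) :
    0 ≤ (fun j => gradP p (x j)) ⬝ᵥ d := by
  have hder : HasDerivAt (fun t : ℝ => ∑ j, |x j + t * d j| ^ p)
      (∑ j, p * gradP p (x j) * d j) 0 := by
    refine HasDerivAt.fun_sum fun j _ => ?_
    have h1 : HasDerivAt (fun t : ℝ => x j + t * d j) (d j) 0 := by
      simpa using ((hasDerivAt_id (0 : ℝ)).mul_const (d j)).const_add (x j)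
    have h2 := hasDerivAt_abs_rpow (x j + 0 * d j) hp
    have h3 := h2.comp (0 : ℝ) h1
    have he : p * |x j + 0 * d j| ^ (p - 2) * (x j + 0 * d j) * d j = p * gradP p (x j) * d j := by
      rw [zero_mul, add_zero, gradP, mul_assoc p]
    rw [he] at h3
    exact h3
  have h0 : 0 ≤ ∑ j, p * gradP p (x j) * d j := by
    refine ge_of_tendsto hder.tendsto_slope_zero_right ?_
    filter_upwards [hd, self_mem_nhdsWithin] with t ht ht0
    have h := (pnorm_le_iff hp _ _).1 (hmin _ ht)
    have ht1 : (0 : ℝ) < t := ht0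
    refine mul_nonneg (inv_nonneg.2 ht1.le) (sub_nonneg.2 ?_)
    simpa using h
  have h1 : ∑ j, p * gradP p (x j) * d j = p * ((fun j => gradP p (x j)) ⬝ᵥ d) := by
    simp only [dotProduct, Finset.mul_sum, mul_assoc]
  rw [h1] at h0
  exact nonneg_of_mul_nonneg_right h0 (by linarith)

/-- First-order necessary conditions. The alternative `Aᵀ r = 0` covers the failure of Slater's
condition, so no rank assumption on `A` is needed. -/
lemma kkt {m N : ℕ} {p ε : ℝ} (hp : 1 < p) (hε : 0 < ε) (A : Fin m → Fin N → ℝ)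
    (y : Fin m → ℝ) (x : Fin N → ℝ) (hy : ε < norm2 y)
    (hfeas : norm2 (mulVec' A x - y) ≤ ε)
    (hmin : ∀ z, norm2 (mulVec' A z - y) ≤ ε → pnorm p x ≤ pnorm p z) :
    (mulVec' A x - y) ⬝ᵥ (mulVec' A x - y) = ε ^ 2 ∧
      ((∀ j, colProd A (mulVec' A x - y) j = 0) ∨
        ∃ t : ℝ, 0 < t ∧ ∀ j, gradP p (x j) = -t * colProd A (mulVec' A x - y) j) := by
  set r := mulVec' A x - y with hr
  set c := colProd A r with hc
  set g : Fin N → ℝ := fun j => gradP p (x j) with hg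
  have hx : x ≠ 0 := by
    rintro rfl
    have h0 : mulVec' A (0 : Fin N → ℝ) = 0 := by funext k; simp [mulVec']
    rw [hr, h0, zero_sub] at hfeas
    have : norm2 (-y) = norm2 y := by simp [norm2]
    linarith
  have hgx : 0 < g ⬝ᵥ x := by
    obtain ⟨j, hj⟩ := Function.ne_iff.1 hx
    have key (t : ℝ) : 0 ≤ gradP p t * t := by
      rw [gradP, mul_assoc]
      exact mul_nonneg (Real.rpow_nonneg (abs_nonneg _) _) (mul_self_nonneg _)
    refine Finset.sum_pos' (fun j _ => key _) ⟨j, Finset.mem_univ _, ?_⟩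
    have hj' : x j ≠ 0 := hj
    have : 0 < |x j| ^ (p - 2) := Real.rpow_pos_of_pos (abs_pos.2 hj') _
    change 0 < gradP p (x j) * x j
    rw [gradP, mul_assoc]
    exact mul_pos this (mul_self_pos.2 hj')
  have hle : r ⬝ᵥ r ≤ ε ^ 2 := (norm2_le_iff hε _).1 hfeas
  have heq : r ⬝ᵥ r = ε ^ 2 := by
    by_contra hne
    have hlt : r ⬝ᵥ r < ε ^ 2 := lt_of_le_of_ne hle hne
    -- in the interior of the constraint, shrinking `x` stays feasible and decreases the norm
    have h := dir_nonneg hp A y x (-x) hmin (by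
      have hcont : Continuous fun t : ℝ => r ⬝ᵥ r +
          t * (2 * (c ⬝ᵥ (-x)) + t * (mulVec' A (-x) ⬝ᵥ mulVec' A (-x))) := by fun_prop
      have hev := (hcont.tendsto 0).eventually_lt_const (u := ε ^ 2) (by simpa using hlt)
      filter_upwards [nhdsWithin_le_nhds hev] with t ht
      rw [norm2_le_iff hε, residual_sq_expand]
      exact ht.le)
    rw [dotProduct_neg] at h
    linarith
  refine ⟨heq, ?_⟩
  by_cases hc0 : ∀ j, c j = 0
  · exact Or.inl hc0
  right
  have hcc : 0 < c ⬝ᵥ c := by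
    push Not at hc0
    obtain ⟨j, hj⟩ := hc0
    exact Finset.sum_pos' (fun j _ => mul_self_nonneg _)
      ⟨j, Finset.mem_univ _, mul_self_pos.2 hj⟩
  have hdesc (d : Fin N → ℝ) (hd : c ⬝ᵥ d < 0) : 0 ≤ g ⬝ᵥ d := by
    refine dir_nonneg hp A y x d hmin ?_
    have hcont : Continuous fun t : ℝ => 2 * (c ⬝ᵥ d) + t * (mulVec' A d ⬝ᵥ mulVec' A d) := by
      fun_prop
    have hev := (hcont.tendsto 0).eventually_lt_const (u := 0) (by simp only [zero_mul, add_zero]; linarith)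
    filter_upwards [nhdsWithin_le_nhds hev, self_mem_nhdsWithin] with t ht ht0
    have ht1 : (0 : ℝ) < t := ht0
    rw [norm2_le_iff hε, residual_sq_expand]
    have := mul_neg_of_pos_of_neg ht1 ht
    linarith
  -- `g` and `c` are parallel: test with minus the component `e` of `g` orthogonal to `c`
  set κ := (g ⬝ᵥ c) / (c ⬝ᵥ c) with hκ
  have hκc : κ * (c ⬝ᵥ c) = g ⬝ᵥ c := div_mul_cancel₀ _ hcc.ne'
  set e : Fin N → ℝ := g - κ • c with he
  have hce : c ⬝ᵥ e = 0 := by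
    rw [he, dotProduct_sub, dotProduct_smul, smul_eq_mul, hκc, dotProduct_comm, sub_self]
  have hge : g ⬝ᵥ e = e ⬝ᵥ e := by
    conv_rhs => rw [he, sub_dotProduct, smul_dotProduct, ← he, hce, smul_zero, sub_zero]
  have hlim (δ : ℝ) (hδ : 0 < δ) : 0 ≤ -(e ⬝ᵥ e) - δ * (g ⬝ᵥ c) := by
    have h := hdesc (-e - δ • c) (by
      rw [dotProduct_sub, dotProduct_neg, hce, dotProduct_smul, smul_eq_mul]
      have := mul_pos hδ hcc
      linarith)
    rwa [dotProduct_sub, dotProduct_neg, hge, dotProduct_smul, smul_eq_mul] at h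
  have hee : 0 ≤ -(e ⬝ᵥ e) := by
    have hcont : Continuous fun δ : ℝ => -(e ⬝ᵥ e) - δ * (g ⬝ᵥ c) := by fun_prop
    have ht : Filter.Tendsto (fun δ : ℝ => -(e ⬝ᵥ e) - δ * (g ⬝ᵥ c)) (𝓝[>] 0)
        (𝓝 (-(e ⬝ᵥ e))) := by
      have := hcont.tendsto 0
      simp only [zero_mul, sub_zero] at this
      exact this.mono_left nhdsWithin_le_nhds
    refine ge_of_tendsto ht ?_
    filter_upwards [self_mem_nhdsWithin] with δ hδ using hlim δ hδ
  have he0 : e = 0 := by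
    have h1 : 0 ≤ e ⬝ᵥ e := Finset.sum_nonneg fun j _ => mul_self_nonneg _
    exact dotProduct_self_eq_zero.1 (le_antisymm (by linarith) h1)
  have hgκ : g = κ • c := sub_eq_zero.1 he0
  have hκle : κ ≤ 0 := by
    have h := hdesc (-c) (by rw [dotProduct_neg]; linarith)
    rw [dotProduct_neg, ← hκc] at h
    by_contra hk
    have := mul_pos (not_le.1 hk) hcc
    linarith
  have hκne : κ ≠ 0 := by
    intro h
    rw [hgκ, h, zero_smul, zero_dotProduct] at hgx
    exact lt_irrefl _ hgx
  refine ⟨-κ, by have := lt_of_le_of_ne hκle hκne; linarith, fun j => ?_⟩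
  have := congrFun hgκ j
  simpa [hg] using this

/-! ### Uniqueness of the residual -/

/-- If `r - r'` is the image of `x - x'` and both pairs satisfy the first-order conditions at all
indices other than `i`, where `x` and `x'` vanish, then `r = r'`. Here `c` and `c'` stand for
`Aᵀ r` and `Aᵀ r'`. -/
lemma residual_unique {m N : ℕ} {p ε : ℝ} (hp : 1 < p) (i : Fin N) (r r' : Fin m → ℝ)
    (x x' c c' : Fin N → ℝ) (hx : x i = 0) (hx' : x' i = 0)
    (hr : r ⬝ᵥ r = ε ^ 2) (hr' : r' ⬝ᵥ r' = ε ^ 2)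
    (h1 : c ⬝ᵥ (x - x') = r ⬝ᵥ (r - r')) (h2 : c' ⬝ᵥ (x - x') = r' ⬝ᵥ (r - r'))
    (k : (∀ j ≠ i, c j = 0) ∨ ∃ t : ℝ, 0 ≤ t ∧ ∀ j ≠ i, gradP p (x j) = -t * c j)
    (k' : (∀ j ≠ i, c' j = 0) ∨ ∃ t : ℝ, 0 ≤ t ∧ ∀ j ≠ i, gradP p (x' j) = -t * c' j) :
    r = r' := by
  have hpos : 0 ≤ (r - r') ⬝ᵥ (r - r') := Finset.sum_nonneg fun j _ => mul_self_nonneg _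
  suffices h : (r - r') ⬝ᵥ (r - r') = 0 from sub_eq_zero.1 (dotProduct_self_eq_zero.1 h)
  have hD : (r - r') ⬝ᵥ (r - r') = 2 * (c ⬝ᵥ (x - x')) := by
    rw [h1]
    simp only [sub_dotProduct, dotProduct_sub, hr, hr', dotProduct_comm r' r]
    ring
  have hD' : (r - r') ⬝ᵥ (r - r') = -2 * (c' ⬝ᵥ (x - x')) := by
    rw [h2]
    simp only [sub_dotProduct, dotProduct_sub, hr, hr', dotProduct_comm r' r]
    ring
  have hzero (b : Fin N → ℝ) (hb : ∀ j ≠ i, b j = 0) : b ⬝ᵥ (x - x') = 0 := by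
    refine Finset.sum_eq_zero fun j _ => ?_
    by_cases hj : j = i
    · simp [hj, hx, hx']
    · simp [hb j hj]
  rcases k with k | ⟨t, ht, k⟩
  · rw [hD, hzero c k, mul_zero]
  rcases k' with k' | ⟨t', ht', k'⟩
  · rw [hD', hzero c' k', mul_zero]
  have hterm (j : Fin N) : 0 ≤ (gradP p (x j) - gradP p (x' j)) * (x j - x' j) := by
    rcases le_total (x j) (x' j) with h | h
    · exact mul_nonneg_of_nonpos_of_nonpos (sub_nonpos.2 ((gradP_strictMono hp).monotone h))
        (sub_nonpos.2 h)
    · exact mul_nonneg (sub_nonneg.2 ((gradP_strictMono hp).monotone h)) (sub_nonneg.2 h)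
  have hsum : ∑ j, (gradP p (x j) - gradP p (x' j)) * (x j - x' j) =
      -t * (c ⬝ᵥ (x - x')) + t' * (c' ⬝ᵥ (x - x')) := by
    simp only [dotProduct, Finset.mul_sum, ← Finset.sum_add_distrib]
    refine Finset.sum_congr rfl fun j _ => ?_
    by_cases hj : j = i
    · simp [hj, hx, hx']
    · rw [k j hj, k' j hj, Pi.sub_apply]; ring
  have hle : ∑ j, (gradP p (x j) - gradP p (x' j)) * (x j - x' j) ≤ 0 := by
    rw [hsum]
    have e1 := mul_nonneg ht hpos
    have e2 := mul_nonneg ht' hpos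
    rw [hD] at e1
    rw [hD'] at e2
    linarith
  have hall := (Finset.sum_eq_zero_iff_of_nonneg fun j _ => hterm j).1
    (le_antisymm hle (Finset.sum_nonneg fun j _ => hterm j))
  have hxx : x - x' = 0 := by
    funext j
    rcases mul_eq_zero.1 (hall j (Finset.mem_univ _)) with h | h
    · exact sub_eq_zero.2 ((gradP_strictMono hp).injective (sub_eq_zero.1 h))
    · exact h
  rw [hD, hxx, dotProduct_zero, mul_zero]

/-! ### Measurability of the exceptional set -/

/-- Tuples `(((A, y), x), t)` such that `x` and the multiplier `t` satisfy the first-order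
conditions for `(A, y)`, with `x_i = 0` and the `i`-th column of `A` orthogonal to the residual. -/
def kktSet (m N : ℕ) (p ε : ℝ) (i : Fin N) :
    Set ((((Fin m → Fin N → ℝ) × (Fin m → ℝ)) × (Fin N → ℝ)) × ℝ) :=
  {q | q.1.2 i = 0 ∧
    (mulVec' q.1.1.1 q.1.2 - q.1.1.2) ⬝ᵥ (mulVec' q.1.1.1 q.1.2 - q.1.1.2) = ε ^ 2 ∧
    colProd q.1.1.1 (mulVec' q.1.1.1 q.1.2 - q.1.1.2) i = 0 ∧
    ((∀ j, colProd q.1.1.1 (mulVec' q.1.1.1 q.1.2 - q.1.1.2) j = 0) ∨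
      (0 ≤ q.2 ∧ ∀ j, gradP p (q.1.2 j) =
        -q.2 * colProd q.1.1.1 (mulVec' q.1.1.1 q.1.2 - q.1.1.2) j))}

/-- The pairs `(A, y)` for which `kktSet` contains a tuple. -/
def badSet (m N : ℕ) (p ε : ℝ) (i : Fin N) : Set ((Fin m → Fin N → ℝ) × (Fin m → ℝ)) :=
  (fun q => q.1.1) '' kktSet m N p ε i

lemma isClosed_kktSet (m N : ℕ) {p : ℝ} (hp : 1 < p) (ε : ℝ) (i : Fin N) :
    IsClosed (kktSet m N p ε i) := by
  have hg := gradP_continuous hp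
  have hr : Continuous fun q : (((Fin m → Fin N → ℝ) × (Fin m → ℝ)) × (Fin N → ℝ)) × ℝ =>
      mulVec' q.1.1.1 q.1.2 - q.1.1.2 := by
    unfold mulVec'; fun_prop
  have hc (j : Fin N) : Continuous
      fun q : (((Fin m → Fin N → ℝ) × (Fin m → ℝ)) × (Fin N → ℝ)) × ℝ =>
      colProd q.1.1.1 (mulVec' q.1.1.1 q.1.2 - q.1.1.2) j := by
    unfold colProd
    refine continuous_finsetSum _ fun k _ => ?_
    exact Continuous.mul (by fun_prop) ((continuous_apply k).comp hr)
  have hx (j : Fin N) : Continuous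
      fun q : (((Fin m → Fin N → ℝ) × (Fin m → ℝ)) × (Fin N → ℝ)) × ℝ => q.1.2 j := by
    fun_prop
  simp only [kktSet, Set.ofPred_and, Set.ofPred_or, Set.ofPred_forall]
  refine (isClosed_eq (hx i) continuous_const).inter
    ((isClosed_eq (hr.dotProduct hr) continuous_const).inter
    ((isClosed_eq (hc i) continuous_const).inter (IsClosed.union ?_ ?_)))
  · exact isClosed_iInter fun j => isClosed_eq (hc j) continuous_const
  · exact (isClosed_le continuous_const continuous_snd).inter <| isClosed_iInter fun j =>
      isClosed_eq (hg.comp (hx j)) (continuous_snd.neg.mul (hc j))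

lemma measurableSet_badSet (m N : ℕ) {p : ℝ} (hp : 1 < p) (ε : ℝ) (i : Fin N) :
    MeasurableSet (badSet m N p ε i) := by
  have h1 : IsSigmaCompact (badSet m N p ε i) :=
    (isSigmaCompact_univ.of_isClosed_subset (isClosed_kktSet m N hp ε i)
      (Set.subset_univ _)).image (by fun_prop)
  obtain ⟨K, hK, hKU⟩ := h1
  rw [← hKU]
  exact MeasurableSet.iUnion fun n => (hK n).isClosed.measurableSet

/-! ### The exceptional set is null -/

/-- Affine hyperplanes in `ℝ^m` are null. -/
lemma hyperplane_null {m : ℕ} (r b : Fin m → ℝ) (hr : r ⬝ᵥ r ≠ 0) :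
    ∀ᵐ a : Fin m → ℝ, (b + a) ⬝ᵥ r ≠ 0 := by
  have hcl : IsClosed {a : Fin m → ℝ | (b + a) ⬝ᵥ r = 0} :=
    isClosed_eq (Continuous.dotProduct (by fun_prop) continuous_const) continuous_const
  refine ae_mem_of_ae_add_linearMap_mem (LinearMap.toSpanSingleton ℝ (Fin m → ℝ) r)
    (volume : Measure ℝ) (volume : Measure (Fin m → ℝ))
    (s := {a : Fin m → ℝ | (b + a) ⬝ᵥ r = 0}ᶜ) hcl.measurableSet.compl fun z => ?_
  have hne : ∀ᵐ t : ℝ, t ≠ -((b + z) ⬝ᵥ r) / (r ⬝ᵥ r) := Measure.ae_ne _ _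
  filter_upwards [hne] with t ht h
  apply ht
  have h' : (b + (z + t • r)) ⬝ᵥ r = 0 := h
  rw [← add_assoc, add_dotProduct, smul_dotProduct, smul_eq_mul] at h'
  rw [eq_div_iff hr]
  linarith

/-- The inclusion of `ℝ^m` as the `i`-th column of `A`. -/
def colIncl (m N : ℕ) (i : Fin N) : (Fin m → ℝ) →ₗ[ℝ] (Fin m → Fin N → ℝ) × (Fin m → ℝ) where
  toFun a := (fun k j => if j = i then a k else 0, 0)
  map_add' a b := by
    ext k j
    · by_cases h : j = i <;> simp [h]
    · simp
  map_smul' s a := by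
    ext k j
    · by_cases h : j = i <;> simp [h]
    · simp

lemma colIncl_mulVec {m N : ℕ} {i : Fin N} (A : Fin m → Fin N → ℝ) (a : Fin m → ℝ)
    (x : Fin N → ℝ) (hx : x i = 0) :
    mulVec' (A + (colIncl m N i a).1) x = mulVec' A x := by
  funext k
  refine Finset.sum_congr rfl fun j _ => ?_
  by_cases hj : j = i
  · simp [hj, hx]
  · simp [colIncl, hj]

lemma colIncl_colProd {m N : ℕ} {i : Fin N} (A : Fin m → Fin N → ℝ) (a r : Fin m → ℝ)
    {j : Fin N} (hj : j ≠ i) :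
    colProd (A + (colIncl m N i a).1) r j = colProd A r j := by
  simp [colProd, colIncl, hj]

lemma badSet_null (m N : ℕ) {p : ℝ} (hp : 1 < p) {ε : ℝ} (hε : 0 < ε) (i : Fin N) :
    volume (badSet m N p ε i) = 0 := by
  have : (volume : Measure (Fin m → Fin N → ℝ)).IsAddHaarMeasure :=
    Measure.pi.isAddHaarMeasure _
  have : (volume : Measure ((Fin m → Fin N → ℝ) × (Fin m → ℝ))).IsAddHaarMeasure :=
    Measure.prod.instIsAddHaarMeasure _ _
  suffices h : ∀ᵐ z : (Fin m → Fin N → ℝ) × (Fin m → ℝ), z ∈ (badSet m N p ε i)ᶜ by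
    rw [ae_iff] at h
    simpa using h
  refine ae_mem_of_ae_add_linearMap_mem (colIncl m N i) (volume : Measure (Fin m → ℝ)) volume
    (measurableSet_badSet m N hp ε i).compl ?_
  rintro ⟨A, y⟩
  by_cases hex : ∃ a, (A, y) + colIncl m N i a ∈ badSet m N p ε i
  swap
  · push Not at hex
    exact Filter.Eventually.of_forall hex
  -- the residual for one column `a₀` is the residual for every other column `a`
  obtain ⟨a₀, ⟨⟨⟨⟨A₀, y₀⟩, x₀⟩, t₀⟩, ⟨hx0, hr0, -, hk0⟩, hq0⟩⟩ := hex
  obtain ⟨rfl, rfl⟩ : A₀ = A + (colIncl m N i a₀).1 ∧ y₀ = y := by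
    have := Prod.ext_iff.1 hq0
    simpa [colIncl] using this
  dsimp only at hx0 hr0 hk0
  rw [colIncl_mulVec A a₀ x₀ hx0] at hr0 hk0
  filter_upwards [hyperplane_null (mulVec' A x₀ - y₀) (fun k => A k i)
    (by rw [hr0]; positivity)] with a ha hmem
  apply ha
  obtain ⟨⟨⟨⟨A₁, y₁⟩, x₁⟩, t₁⟩, ⟨hx1, hr1, hc1, hk1⟩, hq1⟩ := hmem
  obtain ⟨rfl, rfl⟩ : A₁ = A + (colIncl m N i a).1 ∧ y₁ = y₀ := by
    have := Prod.ext_iff.1 hq1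
    simpa [colIncl] using this
  dsimp only at hx1 hr1 hc1 hk1
  rw [colIncl_mulVec A a x₁ hx1] at hr1 hc1 hk1
  have hsub : mulVec' A (x₀ - x₁) = (mulVec' A x₀ - y₁) - (mulVec' A x₁ - y₁) := by
    have := mulVec'_add_smul A x₀ x₁ (-1)
    rw [neg_one_smul, neg_one_smul, ← sub_eq_add_neg, ← sub_eq_add_neg] at this
    rw [this]; abel
  have hrr : mulVec' A x₀ - y₁ = mulVec' A x₁ - y₁ := by
    refine residual_unique hp i _ _ x₀ x₁ (colProd A (mulVec' A x₀ - y₁))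
      (colProd A (mulVec' A x₁ - y₁)) hx0 hx1 hr0 hr1 (by rw [colProd_dot, hsub])
      (by rw [colProd_dot, hsub]) ?_ ?_
    · refine hk0.imp (fun h j hj => ?_) fun h => ⟨t₀, h.1, fun j hj => ?_⟩
      · rw [← h j, colIncl_colProd A a₀ _ hj]
      · rw [h.2 j, colIncl_colProd A a₀ _ hj]
    · refine hk1.imp (fun h j hj => ?_) fun h => ⟨t₁, h.1, fun j hj => ?_⟩
      · rw [← h j, colIncl_colProd A a _ hj]
      · rw [h.2 j, colIncl_colProd A a _ hj]
  rw [hrr]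
  simpa [colProd, colIncl, dotProduct] using hc1

/-- Least sparsity of generalized basis pursuit denoising for `p > 1`, `N ≥ m`, `ε > 0`:
for almost all `(A, y) ∈ ℝ^{m×N} × ℝ^m` with `‖y‖₂ > ε`, any optimal solution of
`min ‖x‖_p s.t. ‖Ax − y‖₂ ≤ ε` has full support. -/
theorem BPDN_least_sparsity {m N : ℕ} (hmN : m ≤ N) (p : ℝ) (hp : 1 < p)
    (ε : ℝ) (hε : 0 < ε) :
    ∃ E : Set ((Fin m → Fin N → ℝ) × (Fin m → ℝ)), volume E = 0 ∧
      ∀ A y, (A, y) ∉ E → ε < norm2 y →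
        ∀ x' : Fin N → ℝ,
          (norm2 (mulVec' A x' - y) ≤ ε ∧
            ∀ x, norm2 (mulVec' A x - y) ≤ ε → pnorm p x' ≤ pnorm p x) →
          suppCard x' = N := by
  refine ⟨⋃ i, badSet m N p ε i, measure_iUnion_null fun i => badSet_null m N hp hε i, ?_⟩
  rintro A y hE hy x ⟨hfeas, hmin⟩
  have hall (i : Fin N) : x i ≠ 0 := by
    intro hi
    apply hE
    obtain ⟨hr, hk⟩ := kkt hp hε A y x hy hfeas hmin
    refine Set.mem_iUnion.2 ⟨i, ?_⟩
    rcases hk with h | ⟨t, ht, h⟩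
    · exact ⟨(((A, y), x), 0), ⟨hi, hr, h i, Or.inl h⟩, rfl⟩
    · refine ⟨(((A, y), x), t), ⟨hi, hr, ?_, Or.inr ⟨ht.le, h⟩⟩, rfl⟩
      have hi' := h i
      rw [hi, gradP_zero] at hi'
      exact (mul_eq_zero.1 hi'.symm).resolve_left (neg_ne_zero.2 ht.ne')
  simp [suppCard, hall]
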